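/- arXiv:0902.3037 — 2 statements merged into one kernel-verified Lean document; each statement's English description precedes it below -/
import Mathlib

section
/- Let R be a Cohen–Macaulay local ring with dualizing (canonical) module ω, and let M be a finitely generated R-module. Then M has finite ω-projective dimension if and only if M has finite injective dimension, and M has finite ω-injective dimension if and only if M has finite projective dimension. -/
set_option linter.unusedVariables false
open CategoryTheory TensorProduct

/-- `pdLE R n M`: the `R`-module `M` has projective dimension at most `n`,
i.e. it admits a projective resolution of length `n`. -/
def pdLE (R : Type) [CommRing R] : ℕ → (M : Type) → (iM : AddCommGroup M) → (jM : Module R M) → Prop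
  | 0, M, iM, jM => Module.Projective R M
  | n+1, M, iM, jM =>
      ∃ (P : Type) (iP : AddCommGroup P) (jP : Module R P) (f : P →ₗ[R] M),
        Module.Projective R P ∧ Function.Surjective f ∧
          pdLE R n (LinearMap.ker f) inferInstance inferInstance

/-- `idLE R n M`: `M` has injective dimension at most `n`,
i.e. it admits an injective resolution of length `n`. -/
def idLE (R : Type) [CommRing R] : ℕ → (M : Type) → (iM : AddCommGroup M) → (jM : Module R M) → Prop
  | 0, M, iM, jM => Module.Injective R M
  | n+1, M, iM, jM =>
      ∃ (I : Type) (iI : AddCommGroup I) (jI : Module R I) (f : M →ₗ[R] I),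
        Module.Injective R I ∧ Function.Injective f ∧
          idLE R n (I ⧸ LinearMap.range f) inferInstance inferInstance

/-- The projective dimension of `M`, as an element of `ℕ∞` (`⊤` means infinite). -/
noncomputable def projDim (R : Type) [CommRing R] (M : Type) [AddCommGroup M] [Module R M] : ℕ∞ :=
  sInf {n : ℕ∞ | ∃ m : ℕ, n = m ∧ pdLE R m M inferInstance inferInstance}

/-- The injective dimension of `M`, as an element of `ℕ∞`. -/
noncomputable def injDim (R : Type) [CommRing R] (M : Type) [AddCommGroup M] [Module R M] : ℕ∞ :=
  sInf {n : ℕ∞ | ∃ m : ℕ, n = m ∧ idLE R m M inferInstance inferInstance}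

/-- A commutative noetherian (local) ring is Gorenstein if it has finite injective
dimension as a module over itself. -/
def IsGorensteinRing (R : Type) [CommRing R] : Prop :=
  ∃ n : ℕ, idLE R n R inferInstance inferInstance

/-- `extGroup R M N i` : the `i`-th Ext module `Ext^i_R(M,N)`. -/
noncomputable def extGroup (R : Type) [CommRing R] (M N : Type) [AddCommGroup M] [Module R M]
    [AddCommGroup N] [Module R N] (i : ℕ) : ModuleCat R :=
  ((Ext R (ModuleCat R) i).obj (Opposite.op (ModuleCat.of R M))).obj (ModuleCat.of R N)

/-- `torGroup R M N i` : the `i`-th Tor module `Tor_i^R(M,N)`. -/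
noncomputable def torGroup (R : Type) [CommRing R] (M N : Type) [AddCommGroup M] [Module R M]
    [AddCommGroup N] [Module R N] (i : ℕ) : ModuleCat R :=
  ((Tor (ModuleCat R) i).obj (ModuleCat.of R M)).obj (ModuleCat.of R N)

/-- `C` is a semidualizing `R`-module: it is finitely generated, the homothety map
`R → Hom_R(C,C)` is bijective, and `Ext^i_R(C,C) = 0` for all `i > 0`. -/
def IsSemidualizing (R : Type) [CommRing R] (C : Type) [AddCommGroup C] [Module R C] : Prop :=
  Module.Finite R C ∧ Function.Bijective (LinearMap.lsmul R C) ∧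
    ∀ i : ℕ, 0 < i → Subsingleton (extGroup R C C i)

/-- `CpdLE R C n M` : `M` has `C`-projective dimension at most `n`, i.e. there is an exact
sequence `0 → C⊗Pₙ → ⋯ → C⊗P₀ → M → 0` with each `Pᵢ` projective. -/
def CpdLE (R C : Type) [CommRing R] [AddCommGroup C] [Module R C] :
    ℕ → (M : Type) → (iM : AddCommGroup M) → (jM : Module R M) → Prop
  | 0, M, iM, jM =>
      ∃ (P : Type) (iP : AddCommGroup P) (jP : Module R P),
        Module.Projective R P ∧ Nonempty ((TensorProduct R C P) ≃ₗ[R] M)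
  | n+1, M, iM, jM =>
      ∃ (P : Type) (iP : AddCommGroup P) (jP : Module R P)
        (f : TensorProduct R C P →ₗ[R] M),
        Module.Projective R P ∧ Function.Surjective f ∧
          CpdLE R C n (LinearMap.ker f) inferInstance inferInstance

/-- `CidLE R C n M` : `M` has `C`-injective dimension at most `n`, i.e. there is an exact
sequence `0 → M → Hom(C,I⁰) → ⋯ → Hom(C,Iⁿ) → 0` with each `Iⁱ` injective. -/
def CidLE (R C : Type) [CommRing R] [AddCommGroup C] [Module R C] :
    ℕ → (M : Type) → (iM : AddCommGroup M) → (jM : Module R M) → Prop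
  | 0, M, iM, jM =>
      ∃ (I : Type) (iI : AddCommGroup I) (jI : Module R I),
        Module.Injective R I ∧ Nonempty (M ≃ₗ[R] (C →ₗ[R] I))
  | n+1, M, iM, jM =>
      ∃ (I : Type) (iI : AddCommGroup I) (jI : Module R I)
        (f : M →ₗ[R] (C →ₗ[R] I)),
        Module.Injective R I ∧ Function.Injective f ∧
          CidLE R C n ((C →ₗ[R] I) ⧸ LinearMap.range f) inferInstance inferInstance

/-- The depth of a module over a local ring: the supremum of lengths of `M`-regular
sequences contained in the maximal ideal. -/
noncomputable def rdepth (R : Type) [CommRing R] [IsLocalRing R]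
    (M : Type) [AddCommGroup M] [Module R M] : ℕ∞ :=
  sSup {n : ℕ∞ | ∃ rs : List R, (rs.length : ℕ∞) = n ∧
    (∀ r ∈ rs, r ∈ IsLocalRing.maximalIdeal R) ∧ RingTheory.Sequence.IsRegular M rs}

section TensorEvaluation

variable {R : Type} [CommRing R]

/-- If `X` is finitely presented and `F` is flat, then `Hom(X, Y) ⊗ F ≃ Hom(X, Y ⊗ F)`. -/
lemma rTensorHomToHomRTensor_bijective_of_flat (X Y F : Type) [AddCommGroup X] [Module R X]
    [AddCommGroup Y] [Module R Y] [AddCommGroup F] [Module R F]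
    [Module.FinitePresentation R X] [Module.Flat R F] :
    Function.Bijective (rTensorHomToHomRTensor (.id R) X Y F) := by
  obtain ⟨n, m, f, g, hf, hfg⟩ := Module.FinitePresentation.exists_fin' R X
  have free : ∀ k : ℕ, Function.Bijective (rTensorHomToHomRTensor (.id R) (Fin k → R) Y F) := by
    intro k
    rw [← rTensorHomEquivHomRTensor_toLinearMap]
    exact (rTensorHomEquivHomRTensor R (Fin k → R) Y F).bijective
  exact LinearMap.bijective_of_bijective_of_injective_of_left_exact
    ((f.lcomp R Y).rTensor F) ((g.lcomp R Y).rTensor F)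
    (f.lcomp R (Y ⊗[R] F)) (g.lcomp R (Y ⊗[R] F))
    (rTensorHomToHomRTensor (.id R) X Y F)
    (rTensorHomToHomRTensor (.id R) (Fin n → R) Y F)
    (rTensorHomToHomRTensor (.id R) (Fin m → R) Y F)
    (by ext; simp) (by ext; simp)
    (Module.Flat.rTensor_exact F (LinearMap.exact_lcomp_of_exact_of_surjective Y hfg hf))
    (LinearMap.exact_lcomp_of_exact_of_surjective _ hfg hf)
    (free n) (free m).1
    (Module.Flat.rTensor_preserves_injective_linearMap _
      (LinearMap.lcomp_injective_of_surjective f hf))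
    (LinearMap.lcomp_injective_of_surjective f hf)

/-- The map `X ⊗ M⋆ → Hom(X, M)⋆` sending `x ⊗ χ` to `φ ↦ χ (φ x)`. -/
noncomputable def characterEval (X M : Type) [AddCommGroup X] [Module R X]
    [AddCommGroup M] [Module R M] :
    X ⊗[R] CharacterModule M →ₗ[R] CharacterModule (X →ₗ[R] M) :=
  TensorProduct.lift
    { toFun := fun x => CharacterModule.dual (LinearMap.applyₗ x)
      map_add' := fun x y => by
        ext χ φ
        exact (congrArg χ (map_add φ x y)).trans (map_add χ _ _)
      map_smul' := fun r x => by
        ext χ φ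
        exact congrArg χ (map_smul φ r x) }

lemma characterEval_tmul_apply {X M : Type} [AddCommGroup X] [Module R X]
    [AddCommGroup M] [Module R M] (x : X) (χ : CharacterModule M) (φ : X →ₗ[R] M) :
    characterEval X M (x ⊗ₜ[R] χ) φ = χ (φ x) := rfl

lemma CharacterModule.dual_exact {A B C : Type} [AddCommGroup A] [Module R A]
    [AddCommGroup B] [Module R B] [AddCommGroup C] [Module R C]
    {f : A →ₗ[R] B} {g : B →ₗ[R] C} (h : Function.Exact f g) :
    Function.Exact (CharacterModule.dual g) (CharacterModule.dual f) := by
  intro χ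
  constructor
  · intro hχ
    have hker : ∀ b, g b = 0 → χ b = 0 := by
      intro b hb
      obtain ⟨a, rfl⟩ := (h b).1 hb
      exact DFunLike.congr_fun hχ a
    let e := g.quotKerEquivRange
    let χ' : CharacterModule (B ⧸ LinearMap.ker g) :=
      QuotientAddGroup.lift (LinearMap.ker g).toAddSubgroup χ (fun b hb => hker b hb)
    obtain ⟨ψ, hψ⟩ := CharacterModule.dual_surjective_of_injective
      ((LinearMap.range g).subtype ∘ₗ e.toLinearMap)
      ((LinearMap.range g).injective_subtype.comp e.injective) χ'
    refine ⟨ψ, ?_⟩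
    ext b
    exact DFunLike.congr_fun hψ (Submodule.Quotient.mk b)
  · rintro ⟨ψ, rfl⟩
    ext a
    exact (congrArg ψ (h.apply_apply_eq_zero a)).trans (map_zero ψ)

lemma characterEval_naturality {X X' : Type} (M : Type) [AddCommGroup X] [Module R X]
    [AddCommGroup X'] [Module R X'] [AddCommGroup M] [Module R M] (f : X →ₗ[R] X') :
    CharacterModule.dual (f.lcomp R M) ∘ₗ characterEval X M =
      characterEval X' M ∘ₗ f.rTensor (CharacterModule M) := by
  ext x χ φ
  rfl

lemma characterEval_bijective_of_pi (k : ℕ) (M : Type) [AddCommGroup M] [Module R M] :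
    Function.Bijective (characterEval (R := R) (Fin k → R) M) := by
  let L : CharacterModule ((Fin k → R) →ₗ[R] M) →ₗ[R] (Fin k → R) ⊗[R] CharacterModule M :=
    ∑ i, TensorProduct.mk R _ _ (Pi.single i 1) ∘ₗ
      CharacterModule.dual (LinearMap.smulRightₗ (LinearMap.proj i))
  have left : L ∘ₗ characterEval (Fin k → R) M = LinearMap.id := by
    ext i χ : 5
    have key : ∀ j, CharacterModule.dual (LinearMap.smulRightₗ (LinearMap.proj j))
        (characterEval (Fin k → R) M (Pi.single i 1 ⊗ₜ[R] χ)) =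
        (Pi.single i 1 : Fin k → R) j • χ := by
      intro j
      ext m
      rfl
    simp only [L, LinearMap.comp_apply, LinearMap.sum_apply, AlgebraTensorModule.curry_apply,
      LinearMap.restrictScalars_self, curry_apply, LinearMap.single_apply, LinearMap.id_coe, id_eq,
      key, TensorProduct.mk_apply]
    rw [Finset.sum_eq_single i]
    · simp
    · intro j _ hj
      simp [hj]
    · simp
  have right : characterEval (Fin k → R) M ∘ₗ L = LinearMap.id := by
    ext ψ φ
    have hφ : ∑ i, LinearMap.smulRightₗ (LinearMap.proj i) (φ (Pi.single i 1)) = φ := by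
      ext i
      simp [Pi.single_apply]
    have h : ∀ i, characterEval (Fin k → R) M (Pi.single i 1 ⊗ₜ[R]
        CharacterModule.dual (LinearMap.smulRightₗ (LinearMap.proj i)) ψ) φ =
        ψ (LinearMap.smulRightₗ (LinearMap.proj i) (φ (Pi.single i 1))) := fun i => rfl
    conv_rhs => rw [← hφ]
    simp only [L, LinearMap.comp_apply, LinearMap.sum_apply, map_sum, TensorProduct.mk_apply,
      LinearMap.id_coe, id_eq]
    exact (AddMonoidHom.finsetSum_apply _ _ _).trans (Finset.sum_congr rfl fun i _ => h i)
  exact Function.bijective_iff_has_inverse.2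
    ⟨L, LinearMap.congr_fun left, LinearMap.congr_fun right⟩

lemma characterEval_bijective (X M : Type) [AddCommGroup X] [Module R X]
    [AddCommGroup M] [Module R M] [Module.FinitePresentation R X] :
    Function.Bijective (characterEval (R := R) X M) := by
  obtain ⟨n, m, f, g, hf, hfg⟩ := Module.FinitePresentation.exists_fin' R X
  exact LinearMap.bijective_of_surjective_of_bijective_of_right_exact
    (g.rTensor _) (f.rTensor _) (CharacterModule.dual (g.lcomp R M))
    (CharacterModule.dual (f.lcomp R M))
    (characterEval _ M) (characterEval _ M) (characterEval X M)
    (characterEval_naturality M g) (characterEval_naturality M f)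
    (rTensor_exact _ hfg hf)
    (CharacterModule.dual_exact (LinearMap.exact_lcomp_of_exact_of_surjective M hfg hf))
    (characterEval_bijective_of_pi m M).2 (characterEval_bijective_of_pi n M)
    (LinearMap.rTensor_surjective _ hf)
    (CharacterModule.dual_surjective_of_injective _
      (LinearMap.lcomp_injective_of_surjective f hf))

end TensorEvaluation

section InjectiveDimension

open Abelian

variable {R : Type} [CommRing R]

lemma ModuleCat.shortExact_of_linearMap {A B C : Type} [AddCommGroup A] [Module R A]
    [AddCommGroup B] [Module R B] [AddCommGroup C] [Module R C]
    {f : A →ₗ[R] B} {g : B →ₗ[R] C} (h : Function.Exact f g)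
    (hf : Function.Injective f) (hg : Function.Surjective g) :
    (ModuleCat.shortComplexOfCompEqZero f g h.linearMap_comp_eq_zero).ShortExact :=
  ModuleCat.shortComplex_shortExact _ h hf hg

lemma hasInjectiveDimensionLT_of_linearEquiv {M N : Type} [AddCommGroup M] [Module R M]
    [AddCommGroup N] [Module R N] (e : M ≃ₗ[R] N) (n : ℕ)
    [HasInjectiveDimensionLT (ModuleCat.of R M) n] :
    HasInjectiveDimensionLT (ModuleCat.of R N) n :=
  hasInjectiveDimensionLT_of_iso e.toModuleIso n

lemma idLE_iff_hasInjectiveDimensionLT (n : ℕ) (M : Type) (iM : AddCommGroup M)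
    (jM : Module R M) :
    idLE R n M iM jM ↔ HasInjectiveDimensionLT (ModuleCat.of R M) (n + 1) := by
  induction n generalizing M with
  | zero =>
    rw [zero_add, ← injective_iff_hasInjectiveDimensionLT_one]
    exact Module.injective_iff_injective_object R M
  | succ n ih =>
    constructor
    · rintro ⟨I, iI, jI, f, hI, hf, h⟩
      have hI' := (Module.injective_iff_injective_object R I).1 hI
      exact ((ModuleCat.shortExact_of_linearMap f.exact_map_mkQ_range hf
        (Submodule.mkQ_surjective _)).hasInjectiveDimensionLT_X₃_iff n hI').1 ((ih _ _ _).1 h)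
    · intro h
      let ⟨I, hI, f, _⟩ := EnoughInjectives.presentation (ModuleCat.of R M)
      have hf : Function.Injective f.hom := (ModuleCat.mono_iff_injective f).mp ‹_›
      refine ⟨I, inferInstance, inferInstance, f.hom,
        (Module.injective_iff_injective_object R I).2 hI, hf, (ih _ _ _).2 ?_⟩
      exact ((ModuleCat.shortExact_of_linearMap f.hom.exact_map_mkQ_range hf
        (Submodule.mkQ_surjective _)).hasInjectiveDimensionLT_X₃_iff n hI).2 h

lemma subsingleton_ext_of_extGroup (X Y : Type) [AddCommGroup X] [Module R X]
    [AddCommGroup Y] [Module R Y] (n : ℕ) (h : Subsingleton (extGroup R X Y (n + 1))) :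
    Subsingleton (Abelian.Ext (ModuleCat.of R X) (ModuleCat.of R Y) (n + 1)) := by
  let P := ProjectiveResolution.of (ModuleCat.of R X)
  have hz : Limits.IsZero ((P.complex.linearYonedaObj R (ModuleCat.of R Y)).homology (n + 1)) :=
    (ModuleCat.isZero_of_subsingleton (extGroup R X Y (n + 1))).of_iso
      (P.isoExt (n + 1) (ModuleCat.of R Y)).symm
  rw [← HomologicalComplex.exactAt_iff_isZero_homology,
    HomologicalComplex.exactAt_iff' _ n (n + 1) (n + 2) (by simp) (by simp),
    ShortComplex.moduleCat_exact_iff] at hz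
  refine subsingleton_of_forall_eq 0 fun α => ?_
  obtain ⟨f, hf, rfl⟩ := P.extMk_surjective α (n + 2) rfl
  rw [P.extMk_eq_zero_iff f (n + 2) rfl hf n rfl]
  obtain ⟨g, hg⟩ := hz f hf
  exact ⟨g, hg⟩

/-- For a finitely generated module `X` over a noetherian ring, the vanishing of
`Ext^(n + 1)(X, Y)` is the extension property with respect to the inclusion of the `(n + 1)`-st
syzygy `K` of `X` into a finite free module. -/
lemma exists_syzygy [IsNoetherianRing R] (n : ℕ) (X : Type) [AddCommGroup X] [Module R X]
    [Module.Finite R X] :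
    ∃ (K : Type) (_ : AddCommGroup K) (_ : Module R K) (k : ℕ) (f : K →ₗ[R] (Fin k → R)),
      Module.Finite R K ∧ Function.Injective f ∧
      ∀ (Y : Type) [AddCommGroup Y] [Module R Y],
        Subsingleton (Abelian.Ext (ModuleCat.of R X) (ModuleCat.of R Y) (n + 1)) ↔
          Function.Surjective (f.lcomp R Y) := by
  induction n generalizing X with
  | zero =>
    obtain ⟨k, p, hp⟩ := Module.Finite.exists_fin' R X
    refine ⟨LinearMap.ker p, inferInstance, inferInstance, k, (LinearMap.ker p).subtype,
      inferInstance, Subtype.val_injective, fun Y _ _ => ?_⟩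
    have hS := ModuleCat.shortExact_of_linearMap p.exact_subtype_ker_map
      Subtype.val_injective hp
    constructor
    · intro h g
      obtain ⟨x, hx⟩ := Ext.contravariant_sequence_exact₁ hS (ModuleCat.of R Y)
        (Ext.mk₀ (ModuleCat.ofHom g)) (n₁ := 1) rfl (Subsingleton.elim _ _)
      obtain ⟨x, rfl⟩ := Ext.mk₀_bijective _ _ |>.2 x
      rw [Ext.mk₀_comp_mk₀] at hx
      have := (Ext.mk₀_bijective _ _).1 hx
      exact ⟨x.hom, congrArg ModuleCat.Hom.hom this⟩
    · intro h
      refine subsingleton_of_forall_eq 0 fun x => ?_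
      have : Projective (ModuleCat.of R (Fin k → R)) :=
        (IsProjective.iff_projective _).1 inferInstance
      obtain ⟨y, rfl⟩ := Ext.contravariant_sequence_exact₃ hS (ModuleCat.of R Y) x
        (Ext.eq_zero_of_projective _) (n₀ := 0) rfl
      obtain ⟨y, rfl⟩ := Ext.mk₀_bijective _ _ |>.2 y
      obtain ⟨g, hg⟩ := h y.hom
      have hy : y = ModuleCat.ofHom (LinearMap.ker p).subtype ≫ ModuleCat.ofHom g := by
        ext : 1
        exact hg.symm
      rw [hy, ← Ext.mk₀_comp_mk₀]
      exact (Ext.comp_assoc_of_second_deg_zero hS.extClass _ _ _).symm.trans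
        ((congrArg (fun z => Ext.comp z _ _) hS.extClass_comp).trans (Ext.zero_comp ..))
  | succ n ih =>
    obtain ⟨k, p, hp⟩ := Module.Finite.exists_fin' R X
    obtain ⟨K, iK, jK, m, f, hK, hf, h⟩ := ih (LinearMap.ker p)
    refine ⟨K, iK, jK, m, f, hK, hf, fun Y _ _ => ?_⟩
    rw [← h]
    have hS := ModuleCat.shortExact_of_linearMap p.exact_subtype_ker_map
      Subtype.val_injective hp
    have : Projective (ModuleCat.of R (Fin k → R)) :=
        (IsProjective.iff_projective _).1 inferInstance
    constructor
    · intro h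
      refine subsingleton_of_forall_eq 0 fun x => ?_
      obtain ⟨y, rfl⟩ := Ext.contravariant_sequence_exact₁ hS (ModuleCat.of R Y)
        x (n₁ := n + 2) (by omega) (Subsingleton.elim _ _)
      rw [Ext.eq_zero_of_projective y, Ext.comp_zero]
    · intro h
      refine subsingleton_of_forall_eq 0 fun x => ?_
      obtain ⟨y, rfl⟩ := Ext.contravariant_sequence_exact₃ hS (ModuleCat.of R Y) x
        (Ext.eq_zero_of_projective _) (n₀ := n + 1) (by omega)
      have : y = 0 := h.elim _ _
      rw [this, Ext.comp_zero]

lemma hasInjectiveDimensionLT_of_subsingleton_ext_quotient (n : ℕ) (Y : Type) [AddCommGroup Y]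
    [Module R Y] (h : ∀ J : Ideal R,
      Subsingleton (Abelian.Ext (ModuleCat.of R (R ⧸ J)) (ModuleCat.of R Y) (n + 1))) :
    HasInjectiveDimensionLT (ModuleCat.of R Y) (n + 1) := by
  induction n generalizing Y with
  | zero =>
    rw [zero_add, ← injective_iff_hasInjectiveDimensionLT_one]
    rw [← Module.injective_iff_injective_object R Y, ← Module.Baer.iff_injective]
    intro J g
    have hS := ModuleCat.shortExact_of_linearMap (f := J.subtype) (g := J.mkQ)
      (LinearMap.exact_subtype_mkQ J) Subtype.val_injective (Submodule.mkQ_surjective J)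
    obtain ⟨x, hx⟩ := Ext.contravariant_sequence_exact₁ hS (ModuleCat.of R Y)
      (Ext.mk₀ (ModuleCat.ofHom g)) (n₁ := 1) rfl ((h J).elim _ _)
    obtain ⟨x, rfl⟩ := Ext.mk₀_bijective _ _ |>.2 x
    rw [Ext.mk₀_comp_mk₀] at hx
    have := (Ext.mk₀_bijective _ _).1 hx
    exact ⟨x.hom, fun a ha => LinearMap.congr_fun (congrArg ModuleCat.Hom.hom this) ⟨a, ha⟩⟩
  | succ n ih =>
    let ⟨I, hI, f, _⟩ := EnoughInjectives.presentation (ModuleCat.of R Y)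
    have hf : Function.Injective f.hom := (ModuleCat.mono_iff_injective f).mp ‹_›
    have hS := ModuleCat.shortExact_of_linearMap f.hom.exact_map_mkQ_range hf
        (Submodule.mkQ_surjective _)
    refine (hS.hasInjectiveDimensionLT_X₃_iff n hI).1 (ih _ fun J => ?_)
    refine subsingleton_of_forall_eq 0 fun x => ?_
    obtain ⟨y, rfl⟩ := Ext.covariant_sequence_exact₃ (ModuleCat.of R (R ⧸ J)) hS x
      (n₁ := n + 2) rfl ((h J).elim _ _)
    have : y = 0 := Ext.eq_zero_of_injective y
    rw [this, Ext.zero_comp]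

end InjectiveDimension

section Auslander

open Abelian

variable {R : Type} [CommRing R]

lemma exists_lift_of_subsingleton_ext {X A B C : Type} [AddCommGroup X] [Module R X]
    [AddCommGroup A] [Module R A] [AddCommGroup B] [Module R B] [AddCommGroup C] [Module R C]
    {f : A →ₗ[R] B} {g : B →ₗ[R] C} (h : Function.Exact f g)
    (hf : Function.Injective f) (hg : Function.Surjective g)
    (hX : Subsingleton (Abelian.Ext (ModuleCat.of R X) (ModuleCat.of R A) 1))
    (φ : X →ₗ[R] C) : ∃ ψ : X →ₗ[R] B, g ∘ₗ ψ = φ := by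
  obtain ⟨x, hx⟩ := Ext.covariant_sequence_exact₃ (ModuleCat.of R X)
    (ModuleCat.shortExact_of_linearMap h hf hg)
    (Ext.mk₀ (ModuleCat.ofHom φ)) (n₁ := 1) rfl (hX.elim _ _)
  obtain ⟨x, rfl⟩ := Ext.mk₀_bijective _ _ |>.2 x
  rw [Ext.mk₀_comp_mk₀] at hx
  exact ⟨x.hom, congrArg ModuleCat.Hom.hom ((Ext.mk₀_bijective _ _).1 hx)⟩

lemma exact_compRight_of_exact_of_injective (X : Type) {A B D : Type} [AddCommGroup X] [Module R X]
    [AddCommGroup A] [Module R A] [AddCommGroup B] [Module R B] [AddCommGroup D] [Module R D]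
    {f : A →ₗ[R] B} {g : B →ₗ[R] D} (h : Function.Exact f g) (hf : Function.Injective f) :
    Function.Exact (f.compRight R (M := X)) (g.compRight R (M := X)) := by
  intro ψ
  constructor
  · intro hψ
    have hmem : ∀ x, ψ x ∈ LinearMap.range f := fun x => (h _).1 (LinearMap.congr_fun hψ x)
    refine ⟨(LinearEquiv.ofInjective f hf).symm ∘ₗ ψ.codRestrict _ hmem, ?_⟩
    ext x
    exact congrArg Subtype.val
      ((LinearEquiv.ofInjective f hf).apply_symm_apply (ψ.codRestrict _ hmem x))
  · rintro ⟨φ, rfl⟩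
    ext x
    exact h.apply_apply_eq_zero _

lemma subsingleton_ext_tensorProduct_of_flat [IsNoetherianRing R] (n : ℕ) (X Y F : Type)
    [AddCommGroup X] [Module R X] [Module.Finite R X] [AddCommGroup Y] [Module R Y]
    [AddCommGroup F] [Module R F] [Module.Flat R F]
    (h : Subsingleton (Abelian.Ext (ModuleCat.of R X) (ModuleCat.of R Y) (n + 1))) :
    Subsingleton (Abelian.Ext (ModuleCat.of R X) (ModuleCat.of R (Y ⊗[R] F)) (n + 1)) := by
  obtain ⟨K, iK, jK, k, f, hK, hf, hX⟩ := exists_syzygy (R := R) n X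
  rw [hX] at h ⊢
  have := Module.finitePresentation_of_finite R K
  have hsq : f.lcomp R (Y ⊗[R] F) ∘ₗ rTensorHomToHomRTensor (.id R) (Fin k → R) Y F =
      rTensorHomToHomRTensor (.id R) K Y F ∘ₗ (f.lcomp R Y).rTensor F := by
    ext; simp
  have hs : Function.Surjective
      (f.lcomp R (Y ⊗[R] F) ∘ₗ rTensorHomToHomRTensor (.id R) (Fin k → R) Y F) := by
    rw [hsq]
    exact (rTensorHomToHomRTensor_bijective_of_flat K Y F).2.comp
      (LinearMap.rTensor_surjective F h)
  exact Function.Surjective.of_comp hs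

lemma hasInjectiveDimensionLT_tensorProduct_of_flat [IsNoetherianRing R] (n : ℕ) (Y F : Type)
    [AddCommGroup Y] [Module R Y] [AddCommGroup F] [Module R F] [Module.Flat R F]
    (h : HasInjectiveDimensionLT (ModuleCat.of R Y) (n + 1)) :
    HasInjectiveDimensionLT (ModuleCat.of R (Y ⊗[R] F)) (n + 1) :=
  hasInjectiveDimensionLT_of_subsingleton_ext_quotient n _ fun J =>
    subsingleton_ext_tensorProduct_of_flat n (R ⧸ J) Y F
      (HasInjectiveDimensionLT.subsingleton _ (n + 1) (n + 1) le_rfl _)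

lemma subsingleton_of_subsingleton_linearMap [IsNoetherianRing R] {C : Type} [AddCommGroup C]
    [Module R C] [Module.Finite R C] (hC : Function.Injective (LinearMap.lsmul R C))
    (T : Type) [AddCommGroup T] [Module R T] [Subsingleton (C →ₗ[R] T)] : Subsingleton T := by
  refine subsingleton_of_forall_eq 0 fun t => ?_
  let N := Submodule.span R {t}
  have : Module.Finite R N := Module.Finite.span_singleton R t
  have hN : Subsingleton (C →ₗ[R] N) :=
    ⟨fun a b => LinearMap.ext fun x => Subtype.ext
      (LinearMap.congr_fun (Subsingleton.elim (N.subtype ∘ₗ a) (N.subtype ∘ₗ b)) x)⟩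
  obtain ⟨r, hr, hreg⟩ := IsSMulRegular.subsingleton_linearMap_iff.1 hN
  have hr0 : r = 0 := hC (by
    ext x
    simpa using Module.mem_annihilator.1 hr x)
  subst hr0
  have : (⟨t, Submodule.mem_span_singleton_self t⟩ : N) = 0 := hreg (by simp)
  exact congrArg Subtype.val this

variable (R) in
/-- `G` lies in the Auslander class of the module `C` (up to the vanishing of Tor), and `C ⊗ G` has
injective dimension at most `n`. -/
structure IsAuslander (C : Type) [AddCommGroup C] [Module R C] (n : ℕ)
    (G : Type) [AddCommGroup G] [Module R G] : Prop where
  unit_bijective : Function.Bijective (TensorProduct.mk R C G).flip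
  subsingleton_ext : ∀ i : ℕ,
    Subsingleton (Abelian.Ext (ModuleCat.of R C) (ModuleCat.of R (C ⊗[R] G)) (i + 1))
  hasInjectiveDimensionLT : HasInjectiveDimensionLT (ModuleCat.of R (C ⊗[R] G)) (n + 1)

variable [IsNoetherianRing R] {C : Type} [AddCommGroup C] [Module R C] {n : ℕ}

lemma IsSemidualizing.isAuslander_of_flat (hC : IsSemidualizing R C)
    (hid : HasInjectiveDimensionLT (ModuleCat.of R C) (n + 1))
    (F : Type) [AddCommGroup F] [Module R F] [Module.Flat R F] : IsAuslander R C n F where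
  unit_bijective := by
    have := hC.1
    have := Module.finitePresentation_of_finite R C
    have h : (TensorProduct.mk R C F).flip =
        rTensorHomToHomRTensor (.id R) C C F ∘ₗ (LinearMap.lsmul R C).rTensor F ∘ₗ
          (TensorProduct.lid R F).symm.toLinearMap := by
      ext
      simp
    rw [h]
    exact (rTensorHomToHomRTensor_bijective_of_flat C C F).comp
      (((LinearEquiv.ofBijective _ hC.2.1).rTensor F).bijective.comp
        (TensorProduct.lid R F).symm.bijective)
  subsingleton_ext i := by
    have := hC.1
    exact subsingleton_ext_tensorProduct_of_flat i C C F
      (subsingleton_ext_of_extGroup C C i (hC.2.2 (i + 1) i.succ_pos))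
  hasInjectiveDimensionLT := hasInjectiveDimensionLT_tensorProduct_of_flat n C F hid

section Step

variable {K F G : Type} [AddCommGroup K] [Module R K] [AddCommGroup F] [Module R F]
  [AddCommGroup G] [Module R G] {f : K →ₗ[R] F} {g : F →ₗ[R] G}

lemma IsSemidualizing.lTensor_injective (hC : IsSemidualizing R C) (hf : Function.Injective f)
    (hK : IsAuslander R C n K) (hF : IsAuslander R C n F) :
    Function.Injective (f.lTensor C) := by
  have := hC.1
  rw [← LinearMap.ker_eq_bot, ← Submodule.subsingleton_iff_eq_bot]
  have : Subsingleton (C →ₗ[R] LinearMap.ker (f.lTensor C)) := by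
    refine subsingleton_of_forall_eq 0 fun φ => ?_
    obtain ⟨k, hk⟩ := hK.unit_bijective.2 ((LinearMap.ker (f.lTensor C)).subtype ∘ₗ φ)
    have h0 : (TensorProduct.mk R C F).flip (f k) = 0 := by
      ext c
      have h1 : c ⊗ₜ[R] k = φ c := LinearMap.congr_fun hk c
      have h2 : f.lTensor C (c ⊗ₜ[R] k) = 0 := by
        rw [h1]
        exact (φ c).2
      simpa using h2
    have hfk : f k = 0 := hF.unit_bijective.1 (h0.trans (map_zero _).symm)
    have hk0 : k = 0 := hf (hfk.trans (map_zero _).symm)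
    ext c
    have h1 : c ⊗ₜ[R] k = φ c := LinearMap.congr_fun hk c
    simp [← h1, hk0]
  exact subsingleton_of_subsingleton_linearMap hC.2.1.1 _

lemma IsSemidualizing.isAuslander_of_exact (hC : IsSemidualizing R C) (hfg : Function.Exact f g)
    (hf : Function.Injective f) (hg : Function.Surjective g)
    (hK : IsAuslander R C n K) (hF : IsAuslander R C n F) : IsAuslander R C n G := by
  have hinj := hC.lTensor_injective hf hK hF
  have hsurj := LinearMap.lTensor_surjective C hg
  have hex := lTensor_exact C hfg hg
  have hS := ModuleCat.shortExact_of_linearMap hex hinj hsurj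
  refine ⟨?_, fun i => ?_, ?_⟩
  · refine LinearMap.bijective_of_surjective_of_bijective_of_right_exact f g
      ((f.lTensor C).compRight R (M := C)) ((g.lTensor C).compRight R (M := C)) _ _ _ ?_ ?_ hfg ?_
      hK.unit_bijective.2 hF.unit_bijective hg ?_
    · ext; rfl
    · ext; rfl
    · exact exact_compRight_of_exact_of_injective C hex hinj
    · exact exists_lift_of_subsingleton_ext hex hinj hsurj (hK.subsingleton_ext 0)
  · refine subsingleton_of_forall_eq 0 fun x => ?_
    obtain ⟨y, rfl⟩ := Ext.covariant_sequence_exact₃ (ModuleCat.of R C) hS x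
      (n₁ := i + 2) rfl ((hK.subsingleton_ext (i + 1)).elim _ _)
    have : y = 0 := (hF.subsingleton_ext i).elim _ _
    rw [this, Ext.zero_comp]
  · have := hK.hasInjectiveDimensionLT
    have hK' : HasInjectiveDimensionLT (ModuleCat.of R (C ⊗[R] K)) (n + 1 + 1) :=
      hasInjectiveDimensionLT_of_ge _ (n + 1) _ (by omega)
    exact hS.hasInjectiveDimensionLT_X₃ _ hF.hasInjectiveDimensionLT hK'

end Step

lemma characterModule_flat_of_injective (I : Type) [AddCommGroup I] [Module R I]
    (hI : Module.Injective R I) : Module.Flat R (CharacterModule I) := by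
  rw [Module.Flat.iff_rTensor_injective]
  intro J _
  have := Module.finitePresentation_of_finite R J
  have h : Function.Injective
      (characterEval R I ∘ₗ J.subtype.rTensor (CharacterModule I)) := by
    rw [← characterEval_naturality]
    rw [LinearMap.coe_comp]
    refine Function.Injective.comp (CharacterModule.dual_injective_of_surjective _ fun φ => ?_)
      (characterEval_bijective J I).1
    obtain ⟨ψ, hψ⟩ := Module.Injective.out J.subtype Subtype.val_injective φ
    exact ⟨ψ, LinearMap.ext hψ⟩
  exact Function.Injective.of_comp h

lemma IsSemidualizing.isAuslander_of_pdLE (hC : IsSemidualizing R C)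
    (hid : HasInjectiveDimensionLT (ModuleCat.of R C) (n + 1)) (m : ℕ) (M : Type)
    (iM : AddCommGroup M) (jM : Module R M) (h : pdLE R m M iM jM) : IsAuslander R C n M := by
  induction m generalizing M with
  | zero =>
    have : Module.Projective R M := h
    exact hC.isAuslander_of_flat hid M
  | succ m ih =>
    obtain ⟨P, iP, jP, f, hP, hf, h⟩ := h
    exact hC.isAuslander_of_exact f.exact_subtype_ker_map Subtype.val_injective hf
      (ih _ _ _ h) (hC.isAuslander_of_flat hid P)

lemma IsSemidualizing.isAuslander_characterModule_of_idLE (hC : IsSemidualizing R C)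
    (hid : HasInjectiveDimensionLT (ModuleCat.of R C) (n + 1)) (m : ℕ) (M : Type)
    (iM : AddCommGroup M) (jM : Module R M) (h : idLE R m M iM jM) :
    IsAuslander R C n (CharacterModule M) := by
  induction m generalizing M with
  | zero =>
    have := characterModule_flat_of_injective M h
    exact hC.isAuslander_of_flat hid _
  | succ m ih =>
    obtain ⟨I, iI, jI, f, hI, hf, h⟩ := h
    have := characterModule_flat_of_injective I hI
    exact hC.isAuslander_of_exact (CharacterModule.dual_exact f.exact_map_mkQ_range)
      (CharacterModule.dual_injective_of_surjective _ (Submodule.mkQ_surjective _))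
      (CharacterModule.dual_surjective_of_injective _ hf)
      (ih _ _ _ h) (hC.isAuslander_of_flat hid _)

end Auslander

section Duality

open Abelian

variable {R : Type} [CommRing R]

lemma CpdLE.congr {C : Type} [AddCommGroup C] [Module R C] {m : ℕ} {M N : Type}
    {iM : AddCommGroup M} {jM : Module R M} {iN : AddCommGroup N} {jN : Module R N}
    (h : CpdLE R C m M iM jM) (e : M ≃ₗ[R] N) : CpdLE R C m N iN jN := by
  cases m with
  | zero =>
    obtain ⟨P, iP, jP, hP, ⟨e'⟩⟩ := h
    exact ⟨P, iP, jP, hP, ⟨e'.trans e⟩⟩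
  | succ m =>
    obtain ⟨P, iP, jP, f, hP, hf, h⟩ := h
    refine ⟨P, iP, jP, e.toLinearMap ∘ₗ f, hP, e.surjective.comp hf, ?_⟩
    rw [LinearEquiv.ker_comp]
    exact h

lemma pdLE_of_hasInjectiveDimensionLT_characterModule [IsNoetherianRing R] [IsLocalRing R]
    (m : ℕ) (M : Type) (iM : AddCommGroup M) (jM : Module R M) [Module.Finite R M]
    (h : HasInjectiveDimensionLT (ModuleCat.of R (CharacterModule M)) (m + 1)) :
    pdLE R m M iM jM := by
  induction m generalizing M with
  | zero =>
    rw [zero_add, ← injective_iff_hasInjectiveDimensionLT_one,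
      ← Module.injective_iff_injective_object R (CharacterModule M),
      ← Module.Flat.iff_characterModule_injective] at h
    have := Module.finitePresentation_of_finite R M
    have : Module.Free R M := Module.free_of_flat_of_isLocalRing
    exact Module.Projective.of_free
  | succ m ih =>
    obtain ⟨k, p, hp⟩ := Module.Finite.exists_fin' R M
    refine ⟨Fin k → R, inferInstance, inferInstance, p, inferInstance, hp, ih _ _ _ ?_⟩
    have hI : Injective (ModuleCat.of R (CharacterModule (Fin k → R))) :=
      (Module.injective_iff_injective_object R _).1
        (Module.Flat.iff_characterModule_injective.1 inferInstance)
    exact ((ModuleCat.shortExact_of_linearMap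
      (CharacterModule.dual_exact p.exact_subtype_ker_map)
      (CharacterModule.dual_injective_of_surjective _ hp)
      (CharacterModule.dual_surjective_of_injective _
        Subtype.val_injective)).hasInjectiveDimensionLT_X₃_iff m hI).2 h

lemma CidLE.of_idLE {C : Type} [AddCommGroup C] [Module R C] (m : ℕ) (L : Type)
    (iL : AddCommGroup L) (jL : Module R L) (h : idLE R m L iL jL)
    (hext : ∀ i : ℕ, Subsingleton (Abelian.Ext (ModuleCat.of R C) (ModuleCat.of R L) (i + 1)))
    (N : Type) (iN : AddCommGroup N) (jN : Module R N) (e : N ≃ₗ[R] (C →ₗ[R] L)) :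
    CidLE R C m N iN jN := by
  induction m generalizing L N with
  | zero => exact ⟨L, iL, jL, h, ⟨e⟩⟩
  | succ m ih =>
    obtain ⟨I, iI, jI, f, hI, hf, h⟩ := h
    have hI' : Injective (ModuleCat.of R I) := (Module.injective_iff_injective_object R I).1 hI
    have hex := f.exact_map_mkQ_range
    have hsurj := Submodule.mkQ_surjective (LinearMap.range f)
    have hS := ModuleCat.shortExact_of_linearMap hex hf hsurj
    have hN : Function.Exact (f.compRight R (M := C) ∘ₗ e.toLinearMap)
        ((LinearMap.range f).mkQ.compRight R (M := C)) := by
      have := exact_compRight_of_exact_of_injective C hex hf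
      rw [LinearMap.exact_iff] at this ⊢
      rw [LinearEquiv.range_comp]
      exact this
    refine ⟨I, iI, jI, f.compRight R (M := C) ∘ₗ e.toLinearMap, hI, ?_, ?_⟩
    · have hcomp : Function.Injective (f.compRight R (M := C)) :=
        fun a b hab => LinearMap.ext fun x => hf (LinearMap.congr_fun hab x)
      exact hcomp.comp e.injective
    · refine ih (I ⧸ LinearMap.range f) _ _ h (fun i => subsingleton_of_forall_eq 0 fun x => ?_)
        _ _ _ (hN.linearEquivOfSurjective
          (exists_lift_of_subsingleton_ext hex hf hsurj (hext 0)))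
      obtain ⟨y, rfl⟩ := Ext.covariant_sequence_exact₃ (ModuleCat.of R C) hS x
        (n₁ := i + 2) rfl ((hext (i + 1)).elim _ _)
      have : y = 0 := Ext.eq_zero_of_injective y
      rw [this, Ext.zero_comp]

lemma Module.finite_linearMap_of_isNoetherianRing [IsNoetherianRing R] (X M : Type)
    [AddCommGroup X] [Module R X] [Module.Finite R X] [AddCommGroup M] [Module R M]
    [Module.Finite R M] : Module.Finite R (X →ₗ[R] M) := by
  obtain ⟨k, p, hp⟩ := Module.Finite.exists_fin' R X
  exact Module.Finite.of_injective (p.lcomp R M) (LinearMap.lcomp_injective_of_surjective p hp)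

variable [IsNoetherianRing R] {C : Type} [AddCommGroup C] [Module R C] {n : ℕ}

lemma CpdLE.hasInjectiveDimensionLT
    (hid : HasInjectiveDimensionLT (ModuleCat.of R C) (n + 1)) (m : ℕ) (M : Type)
    (iM : AddCommGroup M) (jM : Module R M) (h : CpdLE R C m M iM jM) :
    HasInjectiveDimensionLT (ModuleCat.of R M) (n + 1) := by
  induction m generalizing M with
  | zero =>
    obtain ⟨P, iP, jP, hP, ⟨e⟩⟩ := h
    have := hasInjectiveDimensionLT_tensorProduct_of_flat n C P hid
    exact hasInjectiveDimensionLT_of_linearEquiv e _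
  | succ m ih =>
    obtain ⟨P, iP, jP, f, hP, hf, h⟩ := h
    have := ih _ _ _ h
    have hK : HasInjectiveDimensionLT (ModuleCat.of R (LinearMap.ker f)) (n + 1 + 1) :=
      hasInjectiveDimensionLT_of_ge _ (n + 1) _ (by omega)
    exact (ModuleCat.shortExact_of_linearMap f.exact_subtype_ker_map Subtype.val_injective
      hf).hasInjectiveDimensionLT_X₃ _
        (hasInjectiveDimensionLT_tensorProduct_of_flat n C P hid) hK

lemma CidLE.hasInjectiveDimensionLT_characterModule [Module.Finite R C]
    (hid : HasInjectiveDimensionLT (ModuleCat.of R C) (n + 1)) (m : ℕ) (M : Type)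
    (iM : AddCommGroup M) (jM : Module R M) (h : CidLE R C m M iM jM) :
    HasInjectiveDimensionLT (ModuleCat.of R (CharacterModule M)) (n + 1) := by
  have := Module.finitePresentation_of_finite R C
  have key : ∀ (I : Type) [AddCommGroup I] [Module R I], Module.Injective R I →
      HasInjectiveDimensionLT (ModuleCat.of R (CharacterModule (C →ₗ[R] I))) (n + 1) := by
    intro I _ _ hI
    have := characterModule_flat_of_injective I hI
    have := hasInjectiveDimensionLT_tensorProduct_of_flat n C (CharacterModule I) hid
    exact hasInjectiveDimensionLT_of_linearEquiv
      (LinearEquiv.ofBijective _ (characterEval_bijective C I)) _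
  induction m generalizing M with
  | zero =>
    obtain ⟨I, iI, jI, hI, ⟨e⟩⟩ := h
    have := key I hI
    exact hasInjectiveDimensionLT_of_linearEquiv (CharacterModule.congr e.symm) _
  | succ m ih =>
    obtain ⟨I, iI, jI, f, hI, hf, h⟩ := h
    have := ih _ _ _ h
    have hK : HasInjectiveDimensionLT
        (ModuleCat.of R (CharacterModule ((C →ₗ[R] I) ⧸ LinearMap.range f))) (n + 1 + 1) :=
      hasInjectiveDimensionLT_of_ge _ (n + 1) _ (by omega)
    exact (ModuleCat.shortExact_of_linearMap (CharacterModule.dual_exact f.exact_map_mkQ_range)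
      (CharacterModule.dual_injective_of_surjective _ (Submodule.mkQ_surjective _))
      (CharacterModule.dual_surjective_of_injective _ hf)).hasInjectiveDimensionLT_X₃ _ (key I hI) hK

lemma IsSemidualizing.CpdLE_tensorProduct_of_pdLE (hC : IsSemidualizing R C)
    (hid : HasInjectiveDimensionLT (ModuleCat.of R C) (n + 1)) (m : ℕ) (N : Type)
    (iN : AddCommGroup N) (jN : Module R N) (h : pdLE R m N iN jN) :
    CpdLE R C m (C ⊗[R] N) inferInstance inferInstance := by
  induction m generalizing N with
  | zero => exact ⟨N, iN, jN, h, ⟨LinearEquiv.refl R _⟩⟩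
  | succ m ih =>
    obtain ⟨P, iP, jP, f, hP, hf, h⟩ := h
    refine ⟨P, iP, jP, f.lTensor C, hP, LinearMap.lTensor_surjective C hf, ?_⟩
    have hinj := hC.lTensor_injective (n := n) (f := (LinearMap.ker f).subtype)
      Subtype.val_injective (hC.isAuslander_of_pdLE hid m _ _ _ h) (hC.isAuslander_of_flat hid P)
    have hex := lTensor_exact C f.exact_subtype_ker_map hf
    exact (ih _ _ _ h).congr
      ((LinearEquiv.ofInjective _ hinj).trans (LinearEquiv.ofEq _ _ hex.linearMap_ker_eq.symm))

lemma IsAuslander.eval_bijective [Module.Finite R C] {M : Type} [AddCommGroup M] [Module R M]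
    (h : IsAuslander R C n (CharacterModule M)) :
    Function.Bijective (TensorProduct.lift (LinearMap.applyₗ (R := R) (M := C) (M₂ := M))) := by
  have := Module.finitePresentation_of_finite R C
  rw [← CharacterModule.dual_bijective_iff_bijective]
  have hdual : CharacterModule.dual (TensorProduct.lift
        (LinearMap.applyₗ (R := R) (M := C) (M₂ := M))) =
      CharacterModule.homEquiv.toLinearMap ∘ₗ (characterEval C M).compRight R (M := C) ∘ₗ
        (TensorProduct.mk R C (CharacterModule M)).flip := by
    ext χ z
    induction z using TensorProduct.induction_on with
    | zero => rw [map_zero, map_zero]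
    | tmul c φ => rfl
    | add x y hx hy => rw [map_add, hx, hy, map_add]
  have hcomp : Function.Bijective ((characterEval C M).compRight R (M := C)) :=
    (LinearEquiv.congrRight (LinearEquiv.ofBijective _ (characterEval_bijective C M))).bijective
  rw [hdual]
  exact CharacterModule.homEquiv.bijective.comp (hcomp.comp h.unit_bijective)

end Duality

/-- Let `R` be a Cohen–Macaulay local ring with canonical (dualizing) module `ω`, i.e. a
semidualizing module of finite injective dimension.  A finitely generated module `M` has
finite `ω`-projective dimension iff it has finite injective dimension, and finite
`ω`-injective dimension iff it has finite projective dimension. -/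
theorem omega_pd_id_duality (R : Type) [CommRing R] [IsNoetherianRing R] [IsLocalRing R]
    (hCM : (rdepth R R : WithBot ℕ∞) = ringKrullDim R)
    (ω : Type) [AddCommGroup ω] [Module R ω] (hω : IsSemidualizing R ω)
    (hωid : ∃ n : ℕ, idLE R n ω inferInstance inferInstance)
    (M : Type) [AddCommGroup M] [Module R M] [Module.Finite R M] :
    ((∃ n : ℕ, CpdLE R ω n M inferInstance inferInstance) ↔
      (∃ n : ℕ, idLE R n M inferInstance inferInstance)) ∧
    ((∃ n : ℕ, CidLE R ω n M inferInstance inferInstance) ↔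
      (∃ n : ℕ, pdLE R n M inferInstance inferInstance)) := by
  obtain ⟨n, hn⟩ := hωid
  have hid := (idLE_iff_hasInjectiveDimensionLT n ω _ _).1 hn
  have := hω.1
  refine ⟨⟨?_, ?_⟩, ⟨?_, ?_⟩⟩
  · rintro ⟨m, h⟩
    exact ⟨n, (idLE_iff_hasInjectiveDimensionLT n M _ _).2
      (CpdLE.hasInjectiveDimensionLT hid m M _ _ h)⟩
  · rintro ⟨m, h⟩
    have hM := hω.isAuslander_characterModule_of_idLE hid m M _ _ h
    have := Module.finitePresentation_of_finite R ω
    have := Module.finite_linearMap_of_isNoetherianRing (R := R) ω M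
    have := hM.hasInjectiveDimensionLT
    have hN := pdLE_of_hasInjectiveDimensionLT_characterModule n (ω →ₗ[R] M) _ _
      (hasInjectiveDimensionLT_of_linearEquiv
        (LinearEquiv.ofBijective _ (characterEval_bijective ω M)) _)
    exact ⟨n, (hω.CpdLE_tensorProduct_of_pdLE hid n _ _ _ hN).congr
      (LinearEquiv.ofBijective _ hM.eval_bijective)⟩
  · rintro ⟨m, h⟩
    exact ⟨n, pdLE_of_hasInjectiveDimensionLT_characterModule n M _ _
      (CidLE.hasInjectiveDimensionLT_characterModule hid m M _ _ h)⟩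
  · rintro ⟨m, h⟩
    have hM := hω.isAuslander_of_pdLE hid m M _ _ h
    exact ⟨n, CidLE.of_idLE n (ω ⊗[R] M) _ _
      ((idLE_iff_hasInjectiveDimensionLT n _ _ _).2 hM.hasInjectiveDimensionLT)
      hM.subsingleton_ext M _ _ (LinearEquiv.ofBijective _ hM.unit_bijective)⟩
end

section
/- Let R be a commutative noetherian local ring and C a semidualizing R-module with C-pd_R M = 0 for some nonzero finitely generated R-module M of finite C-injective dimension (i.e., M ≅ C ⊗_R P with P finitely generated projective). Then R is Gorenstein. -/
set_option linter.unusedVariables false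
open CategoryTheory TensorProduct

open Limits in
lemma ext_subsingleton_of_extGroup {R : Type} [CommRing R] {M N : Type} [AddCommGroup M]
    [Module R M] [AddCommGroup N] [Module R N] (n : ℕ)
    (h : Subsingleton (extGroup R M N (n + 1))) :
    Subsingleton (Abelian.Ext (ModuleCat.of R M) (ModuleCat.of R N) (n + 1)) := by
  let P := ProjectiveResolution.of (ModuleCat.of R M)
  have hz : IsZero ((P.complex.linearYonedaObj R (ModuleCat.of R N)).homology (n + 1)) :=
    (ModuleCat.isZero_of_subsingleton (extGroup R M N (n + 1))).of_iso
      (P.isoExt (R := R) (n + 1) (ModuleCat.of R N)).symm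
  rw [← HomologicalComplex.exactAt_iff_isZero_homology,
    HomologicalComplex.exactAt_iff' _ n (n + 1) (n + 2) (by simp) (by simp),
    ShortComplex.moduleCat_exact_iff] at hz
  refine subsingleton_of_forall_eq 0 fun e => ?_
  obtain ⟨f, hf, rfl⟩ := P.extMk_surjective e (n + 2) rfl
  obtain ⟨g, hg⟩ := hz f hf
  exact (P.extMk_eq_zero_iff f (n + 2) rfl hf n rfl).2 ⟨g, hg⟩

/-- All the modules `Ext^i_R(K, C)` with `i > 0` vanish. -/
def ExtVanishing (R K C : Type) [CommRing R] [AddCommGroup K] [Module R K]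
    [AddCommGroup C] [Module R C] : Prop :=
  ∀ n : ℕ, Subsingleton (Abelian.Ext (ModuleCat.of R K) (ModuleCat.of R C) (n + 1))

section Syzygy

variable {R : Type} [CommRing R] {K C F : Type} [AddCommGroup K] [Module R K]
  [AddCommGroup C] [Module R C] [AddCommGroup F] [Module R F]

open Abelian

lemma ExtVanishing.ker [Module.Projective R F] (h : ExtVanishing R K C) {f : F →ₗ[R] K}
    (hf : Function.Surjective f) : ExtVanishing R (LinearMap.ker f) C := by
  intro n
  refine subsingleton_of_forall_eq 0 fun e => ?_
  have hS := LinearMap.shortExact_shortComplexKer hf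
  have : Projective f.shortComplexKer.X₂ :=
    inferInstanceAs (Projective (ModuleCat.of R F))
  have := h (n + 1)
  obtain ⟨x, hx⟩ := Ext.contravariant_sequence_exact₁ hS (ModuleCat.of R C) e
    (n₁ := n + 1 + 1) (by lia) (Subsingleton.elim (α := Ext (ModuleCat.of R K) _ _) _ _)
  rw [← hx, x.eq_zero_of_projective, Ext.comp_zero]

lemma ExtVanishing.exists_extend (h : ExtVanishing R K C) {f : F →ₗ[R] K}
    (hf : Function.Surjective f) (g : LinearMap.ker f →ₗ[R] C) :
    ∃ g' : F →ₗ[R] C, g' ∘ₗ (LinearMap.ker f).subtype = g := by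
  have hS := LinearMap.shortExact_shortComplexKer hf
  have := h 0
  obtain ⟨x, hx⟩ := Ext.contravariant_sequence_exact₁ hS (ModuleCat.of R C)
    (Ext.mk₀ (ModuleCat.ofHom g))
    (n₁ := 1) (by lia) (Subsingleton.elim (α := Ext (ModuleCat.of R K) _ _) _ _)
  obtain ⟨y, rfl⟩ := (Ext.mk₀_bijective _ _).2 x
  rw [Ext.mk₀_comp_mk₀] at hx
  exact ⟨y.hom, congrArg ModuleCat.Hom.hom ((Ext.mk₀_bijective _ _).1 hx)⟩

end Syzygy

section HomEval

variable {R : Type*} [CommRing R] {K L C I : Type*} [AddCommGroup K] [Module R K]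
  [AddCommGroup L] [Module R L] [AddCommGroup C] [Module R C] [AddCommGroup I] [Module R I]

/-- The natural map `K ⊗ Hom(C, I) → Hom(Hom(K, C), I)`, `k ⊗ φ ↦ (g ↦ φ (g k))`. -/
noncomputable def homEval (R K C I : Type*) [CommRing R] [AddCommGroup K] [Module R K]
    [AddCommGroup C] [Module R C] [AddCommGroup I] [Module R I] :
    K ⊗[R] (C →ₗ[R] I) →ₗ[R] ((K →ₗ[R] C) →ₗ[R] I) :=
  TensorProduct.lift ((LinearMap.llcomp R (K →ₗ[R] C) C I).flip ∘ₗ LinearMap.applyₗ)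

@[simp]
lemma homEval_tmul (k : K) (φ : C →ₗ[R] I) (g : K →ₗ[R] C) :
    homEval R K C I (k ⊗ₜ φ) g = φ (g k) := rfl

lemma homEval_rTensor (u : K →ₗ[R] L) (x : K ⊗[R] (C →ₗ[R] I)) (g : L →ₗ[R] C) :
    homEval R L C I (u.rTensor _ x) g = homEval R K C I x (g ∘ₗ u) := by
  induction x with
  | zero => simp
  | tmul k φ => simp
  | add x y hx hy => simp [hx, hy]

lemma homEval_pi_bijective (n : ℕ) : Function.Bijective (homEval R (Fin n → R) C I) := by
  let s : (((Fin n → R) →ₗ[R] C) →ₗ[R] I) →ₗ[R] (Fin n → R) ⊗[R] (C →ₗ[R] I) :=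
    ∑ i, TensorProduct.mk R _ _ (Pi.single i 1) ∘ₗ
      LinearMap.lcomp R I (LinearMap.smulRightₗ (LinearMap.proj i))
  have hs (Ψ) : s Ψ = ∑ i, Pi.single i 1 ⊗ₜ
      (Ψ ∘ₗ LinearMap.smulRightₗ (LinearMap.proj i)) := by simp [s, LinearMap.sum_apply]; rfl
  refine Function.bijective_iff_has_inverse.2 ⟨s, fun x => ?_, fun Ψ => ?_⟩
  · refine LinearMap.congr_fun (f := s ∘ₗ homEval R (Fin n → R) C I) (g := LinearMap.id) ?_ x
    ext i φ
    have (j : Fin n) : homEval R (Fin n → R) C I (Pi.single i 1 ⊗ₜ φ) ∘ₗ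
        LinearMap.smulRightₗ (LinearMap.proj j) = (Pi.single i 1 : Fin n → R) j • φ := by
      ext c; simp
    simp [hs, this, Pi.single_apply, ite_smul, TensorProduct.tmul_ite]
  · ext g
    simp only [hs, map_sum, LinearMap.sum_apply, homEval_tmul, LinearMap.comp_apply]
    rw [← map_sum]
    congr 1
    ext i
    simp [Pi.single_apply]

end HomEval

section Tor

variable {R : Type} [CommRing R] {K C I : Type} [AddCommGroup K] [Module R K]
  [AddCommGroup C] [Module R C] [AddCommGroup I] [Module R I]

lemma homEval_surjective [Module.Finite R K] [Module.Injective R I] :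
    Function.Surjective (homEval R K C I) := by
  intro Ψ
  obtain ⟨n, f, hf⟩ := Module.Finite.exists_fin' R K
  obtain ⟨Φ, hΦ⟩ := Module.Injective.out (LinearMap.lcomp R C f)
    (LinearMap.lcomp_injective_of_surjective f hf) Ψ
  obtain ⟨x, rfl⟩ := (homEval_pi_bijective n).2 Φ
  refine ⟨f.rTensor _ x, ?_⟩
  ext g
  rw [homEval_rTensor, ← hΦ]
  rfl

lemma homEval_injective [IsNoetherianRing R] [Module.Finite R K] [Module.Injective R I]
    (h : ExtVanishing R K C) : Function.Injective (homEval R K C I) := by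
  rw [injective_iff_map_eq_zero]
  intro x hx
  obtain ⟨n, f, hf⟩ := Module.Finite.exists_fin' R K
  obtain ⟨y, rfl⟩ := LinearMap.rTensor_surjective (C →ₗ[R] I) hf x
  let res : ((Fin n → R) →ₗ[R] C) →ₗ[R] (LinearMap.ker f →ₗ[R] C) :=
    LinearMap.lcomp R C (LinearMap.ker f).subtype
  have hres : Function.Surjective res := h.exists_extend hf
  have hker : LinearMap.ker res ≤ LinearMap.ker (homEval R (Fin n → R) C I y) := by
    intro g hg
    have hg' : LinearMap.ker f ≤ LinearMap.ker g := fun z hz =>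
      LinearMap.congr_fun (LinearMap.mem_ker.1 hg) ⟨z, hz⟩
    obtain ⟨g', rfl⟩ : ∃ g' : K →ₗ[R] C, g' ∘ₗ f = g :=
      ⟨(LinearMap.ker f).liftQ g hg' ∘ₗ (f.quotKerEquivOfSurjective hf).symm.toLinearMap, by
        ext z
        simp [LinearMap.quotKerEquivOfSurjective_symm_apply]⟩
    rw [LinearMap.mem_ker, ← homEval_rTensor, hx, LinearMap.zero_apply]
  obtain ⟨Ψ, hΨ⟩ : ∃ Ψ, Ψ ∘ₗ res = homEval R (Fin n → R) C I y :=
    ⟨(LinearMap.ker res).liftQ _ hker ∘ₗ (res.quotKerEquivOfSurjective hres).symm.toLinearMap, by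
      ext z
      simp [LinearMap.quotKerEquivOfSurjective_symm_apply]⟩
  obtain ⟨z, rfl⟩ := homEval_surjective Ψ
  have hz : (LinearMap.ker f).subtype.rTensor _ z = y := by
    refine (homEval_pi_bijective n).1 (LinearMap.ext fun g => ?_)
    rw [homEval_rTensor, ← hΨ]
    rfl
  rw [← hz, ← LinearMap.rTensor_comp_apply, LinearMap.comp_ker_subtype]
  simp

/-- Every first syzygy of a finite module `K` with `Ext^i_R(K, C) = 0` for all `i > 0` stays a
submodule after tensoring with `N`; that is, `Tor_1(K, N) = 0` for all such `K`. -/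
def SyzygyTensorInjective (R C N : Type) [CommRing R] [AddCommGroup C] [Module R C]
    [AddCommGroup N] [Module R N] : Prop :=
  ∀ (K : Type) [AddCommGroup K] [Module R K] [Module.Finite R K], ExtVanishing R K C →
    ∀ (n : ℕ) (f : (Fin n → R) →ₗ[R] K), Function.Surjective f →
      Function.Injective ((LinearMap.ker f).subtype.rTensor N)

lemma syzygyTensorInjective_hom [IsNoetherianRing R] [Module.Injective R I] :
    SyzygyTensorInjective R C (C →ₗ[R] I) := by
  intro K _ _ _ hK n f hf
  rw [injective_iff_map_eq_zero]
  intro x hx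
  refine (injective_iff_map_eq_zero _).1 (homEval_injective (hK.ker hf)) x ?_
  ext g
  obtain ⟨g', rfl⟩ := hK.exists_extend hf g
  rw [← homEval_rTensor, hx]
  simp

variable {M H N : Type} [AddCommGroup M] [Module R M] [AddCommGroup H] [Module R H]
  [AddCommGroup N] [Module R N] {f : M →ₗ[R] H} {g : H →ₗ[R] N}

lemma SyzygyTensorInjective.lTensor_injective (hN : SyzygyTensorInjective R C N)
    (hf : Function.Injective f) (hfg : Function.Exact f g) (hg : Function.Surjective g)
    [Module.Finite R K] (hK : ExtVanishing R K C) : Function.Injective (f.lTensor K) := by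
  obtain ⟨n, p, hp⟩ := Module.Finite.exists_fin' R K
  exact lTensor_injective_of_exact_of_exact_of_rTensor_injective
    (LinearMap.exact_subtype_ker_map p) hp hfg hg (hN K hK n p hp)
    (Module.Flat.lTensor_preserves_injective_linearMap f hf)

lemma SyzygyTensorInjective.of_exact [IsNoetherianRing R] (hH : SyzygyTensorInjective R C H)
    (hN : SyzygyTensorInjective R C N) (hf : Function.Injective f) (hfg : Function.Exact f g)
    (hg : Function.Surjective g) : SyzygyTensorInjective R C M := by
  intro K _ _ _ hK n p hp
  have h₁ := hN.lTensor_injective hf hfg hg (hK.ker hp)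
  have h₂ := (hH K hK n p hp).comp h₁
  refine Function.Injective.of_comp (f := f.lTensor (Fin n → R)) ?_
  rw [← LinearMap.coe_comp] at h₂ ⊢
  rwa [LinearMap.lTensor_comp_rTensor, ← LinearMap.rTensor_comp_lTensor]

end Tor

section Unit

variable {R : Type} [CommRing R] [IsNoetherianRing R] {C : Type} [AddCommGroup C] [Module R C]
  [Module.Finite R C]

lemma lift_applyₗ_injective (hC : Function.Surjective (LinearMap.lsmul R C))
    (hExt : ExtVanishing R C C) {I : Type} [AddCommGroup I] [Module R I] [Module.Injective R I] :
    Function.Injective (TensorProduct.lift (LinearMap.applyₗ (R := R) (M := C) (M₂ := I))) := by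
  have h (x : C ⊗[R] (C →ₗ[R] I)) :
      TensorProduct.lift LinearMap.applyₗ x = homEval R C C I x LinearMap.id := by
    induction x with
    | zero => simp
    | tmul c φ => simp
    | add x y hx hy => simp [hx, hy]
  rw [injective_iff_map_eq_zero]
  intro x hx
  refine (injective_iff_map_eq_zero _).1 (homEval_injective hExt) x ?_
  ext g
  obtain ⟨r, rfl⟩ := hC g
  have : LinearMap.lsmul R C r = r • LinearMap.id := rfl
  rw [this, map_smul, ← h, hx]
  simp

variable {M N I : Type} [AddCommGroup M] [Module R M] [AddCommGroup N] [Module R N]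
  [AddCommGroup I] [Module R I] [Module.Injective R I]

lemma unit_bijective_of_exact (hC : Function.Surjective (LinearMap.lsmul R C))
    (hExt : ExtVanishing R C C) (hN : SyzygyTensorInjective R C N)
    (hN' : Function.Injective (TensorProduct.mk R C N).flip) {f : M →ₗ[R] (C →ₗ[R] I)}
    {g : (C →ₗ[R] I) →ₗ[R] N} (hf : Function.Injective f) (hfg : Function.Exact f g)
    (hg : Function.Surjective g) :
    Function.Bijective (TensorProduct.mk R C M).flip := by
  constructor
  · rw [injective_iff_map_eq_zero]
    intro m hm
    refine (injective_iff_map_eq_zero _).1 hf m (LinearMap.ext fun c => ?_)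
    have := congrArg (TensorProduct.lift LinearMap.applyₗ)
      (congrArg (f.lTensor C) (LinearMap.congr_fun hm c))
    simpa using this
  · intro G
    have hinj := hN.lTensor_injective hf hfg hg hExt
    let φ : C →ₗ[R] I := TensorProduct.lift LinearMap.applyₗ ∘ₗ f.lTensor C ∘ₗ G
    have hφ (c : C) : c ⊗ₜ φ = f.lTensor C (G c) :=
      lift_applyₗ_injective hC hExt (by simp [φ])
    have hgφ : g φ = 0 := by
      refine (injective_iff_map_eq_zero _).1 hN' _ (LinearMap.ext fun c => ?_)
      have := congrArg (g.lTensor C) (hφ c)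
      rw [LinearMap.lTensor_tmul, ← LinearMap.lTensor_comp_apply, hfg.linearMap_comp_eq_zero] at this
      simpa using this
    obtain ⟨m, hm⟩ := (hfg φ).1 hgφ
    refine ⟨m, LinearMap.ext fun c => hinj ?_⟩
    rw [← hφ, ← hm]
    rfl

lemma CidLE.syzygyTensorInjective_and_unit_bijective
    (hC : Function.Surjective (LinearMap.lsmul R C)) (hExt : ExtVanishing R C C) (n : ℕ)
    (M : Type) [AddCommGroup M] [Module R M] (hM : CidLE R C n M inferInstance inferInstance) :
    SyzygyTensorInjective R C M ∧ Function.Bijective (TensorProduct.mk R C M).flip := by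
  induction n generalizing M with
  | zero =>
    obtain ⟨I, _, _, _, ⟨e⟩⟩ := hM
    have hfg : Function.Exact e.toLinearMap (0 : (C →ₗ[R] I) →ₗ[R] PUnit) :=
      fun x => ⟨fun _ => e.surjective x, fun _ => rfl⟩
    have hN : SyzygyTensorInjective R C PUnit := fun _ _ _ _ _ _ _ _ =>
      Function.injective_of_subsingleton _
    have hg : Function.Surjective (0 : (C →ₗ[R] I) →ₗ[R] PUnit) := fun _ => ⟨0, rfl⟩
    exact ⟨syzygyTensorInjective_hom.of_exact hN e.injective hfg hg,
      unit_bijective_of_exact hC hExt hN (Function.injective_of_subsingleton _) e.injective hfg hg⟩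
  | succ n ih =>
    obtain ⟨I, _, _, f, _, hf, hN⟩ := hM
    obtain ⟨hN, hN'⟩ := ih _ hN
    have hfg := LinearMap.exact_map_mkQ_range f
    have hg := Submodule.mkQ_surjective (LinearMap.range f)
    exact ⟨syzygyTensorInjective_hom.of_exact hN hf hfg hg,
      unit_bijective_of_exact hC hExt hN hN'.1 hf hfg hg⟩

lemma unit_bijective_of_retract {R C M N : Type*} [CommRing R] [AddCommGroup C] [Module R C]
    [AddCommGroup M] [Module R M] [AddCommGroup N] [Module R N]
    (hM : Function.Bijective (TensorProduct.mk R C M).flip) {i : N →ₗ[R] M} {q : M →ₗ[R] N}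
    (hqi : q ∘ₗ i = LinearMap.id) : Function.Bijective (TensorProduct.mk R C N).flip := by
  constructor
  · rw [injective_iff_map_eq_zero]
    intro x hx
    have hix : i x = 0 := (injective_iff_map_eq_zero _).1 hM.1 _ <| LinearMap.ext fun c => by
      simpa using congrArg (i.lTensor C) (LinearMap.congr_fun hx c)
    simpa [hix] using (LinearMap.congr_fun hqi x).symm
  · intro G
    obtain ⟨m, hm⟩ := hM.2 (i.lTensor C ∘ₗ G)
    refine ⟨q m, LinearMap.ext fun c => ?_⟩
    have := congrArg (q.lTensor C) (LinearMap.congr_fun hm c)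
    rw [LinearMap.comp_apply, ← LinearMap.lTensor_comp_apply, hqi] at this
    simpa using this

end Unit

section Local

variable {R : Type*} [CommRing R] {C : Type*} [AddCommGroup C] [Module R C]

lemma exists_smul_of_unit_bijective (hC : Function.Surjective (LinearMap.lsmul R C))
    (hu : Function.Bijective (TensorProduct.mk R C C).flip) (T : C ⊗[R] C →ₗ[R] C ⊗[R] C) :
    ∃ r : R, T = r • LinearMap.id := by
  let u := LinearEquiv.ofBijective _ hu
  obtain ⟨r, hr⟩ := hC (u.symm.toLinearMap ∘ₗ (TensorProduct.curry (T ∘ₗ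
    (TensorProduct.comm R C C).toLinearMap)))
  refine ⟨r, TensorProduct.ext' fun d c => ?_⟩
  have h := congrArg u (LinearMap.congr_fun hr c)
  have h' := LinearMap.congr_fun h d
  simp only [LinearMap.comp_apply, LinearEquiv.coe_coe, LinearEquiv.apply_symm_apply] at h'
  simpa [u] using h'.symm

variable [IsLocalRing R] [Module.Finite R C] [Nontrivial C]

open IsLocalRing in
lemma exists_span_singleton_eq_top_of_comm_eq_smul {r : R}
    (hr : (TensorProduct.comm R C C).toLinearMap = r • LinearMap.id) :
    ∃ v : C, Submodule.span R {v} = ⊤ := by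
  let V := C ⧸ (maximalIdeal R • ⊤ : Submodule R C)
  let k := R ⧸ maximalIdeal R
  let : Field k := Ideal.Quotient.field _
  have hV : Nontrivial V := by
    refine Submodule.Quotient.nontrivial_iff.2 fun h => ?_
    refine bot_ne_top ((map_mkQ_eq_top (R := R) (N := (⊥ : Submodule R C))).1 ?_)
    have : Subsingleton V := Submodule.Quotient.subsingleton_iff.2 h
    exact Subsingleton.elim _ _
  obtain ⟨w, hw⟩ := exists_ne (0 : V)
  obtain ⟨v, rfl⟩ := Submodule.mkQ_surjective _ w
  obtain ⟨α, hα⟩ : ∃ α : Module.Dual k V, α (Submodule.mkQ _ v) ≠ 0 := by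
    by_contra! h
    exact hw ((Module.forall_dual_apply_eq_zero_iff k _).1 h)
  have key (β : Module.Dual k V) (c : C) :
      α (Submodule.mkQ _ v) * β (Submodule.mkQ _ c) =
        r • (α (Submodule.mkQ _ c) * β (Submodule.mkQ _ v)) := by
    simpa [-Submodule.mkQ_apply] using congrArg (TensorProduct.lift ((LinearMap.mul R k).compl₁₂
      (α.restrictScalars R ∘ₗ Submodule.mkQ _) (β.restrictScalars R ∘ₗ Submodule.mkQ _)))
      (LinearMap.congr_fun hr (c ⊗ₜ v))
  refine ⟨v, map_mkQ_eq_top.1 (Submodule.eq_top_iff'.2 fun x => ?_)⟩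
  obtain ⟨c, rfl⟩ := Submodule.mkQ_surjective _ x
  rw [Submodule.map_span, Set.image_singleton, Submodule.mem_span_singleton]
  obtain ⟨s, hs⟩ := Ideal.Quotient.mk_surjective
    ((α (Submodule.mkQ _ v))⁻¹ * (r • α (Submodule.mkQ _ c)) : k)
  refine ⟨s, sub_eq_zero.1 ((Module.forall_dual_apply_eq_zero_iff k (V := V) _).1 fun β => ?_)⟩
  have hsβ (y : V) : β (s • y) = Ideal.Quotient.mk (maximalIdeal R) s * β y :=
    β.map_smul (Ideal.Quotient.mk (maximalIdeal R) s) y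
  rw [map_sub, sub_eq_zero, hsβ, hs]
  refine mul_left_cancel₀ hα ?_
  rw [key, ← mul_assoc, mul_inv_cancel_left₀ hα, smul_mul_assoc]

lemma nonempty_linearEquiv_of_unit_bijective (hC : Function.Bijective (LinearMap.lsmul R C))
    (hu : Function.Bijective (TensorProduct.mk R C C).flip) : Nonempty (R ≃ₗ[R] C) := by
  obtain ⟨r, hr⟩ := exists_smul_of_unit_bijective hC.2 hu (TensorProduct.comm R C C).toLinearMap
  obtain ⟨v, hv⟩ := exists_span_singleton_eq_top_of_comm_eq_smul hr
  refine ⟨LinearEquiv.ofBijective (LinearMap.toSpanSingleton R C v) ⟨?_, ?_⟩⟩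
  · rw [injective_iff_map_eq_zero]
    intro s hs
    refine (injective_iff_map_eq_zero (LinearMap.lsmul R C)).1 hC.1 s (LinearMap.ext fun c => ?_)
    obtain ⟨t, rfl⟩ := Submodule.mem_span_singleton.1 (hv ▸ Submodule.mem_top : c ∈ _)
    have : s • v = 0 := hs
    simp [this]
  · rw [← LinearMap.range_eq_top, LinearMap.range_toSpanSingleton, hv]

end Local

section InjectiveDimension

variable {R : Type} [CommRing R] {C : Type} [AddCommGroup C] [Module R C]

lemma shortExact_mkQ_range {M N : Type} [AddCommGroup M] [Module R M] [AddCommGroup N] [Module R N]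
    {f : M →ₗ[R] N} (hf : Function.Injective f) :
    (ModuleCat.shortComplexOfCompEqZero (R := R) f (LinearMap.range f).mkQ
      f.exact_map_mkQ_range.linearMap_comp_eq_zero).ShortExact :=
  ModuleCat.shortComplex_shortExact _ f.exact_map_mkQ_range hf (Submodule.mkQ_surjective _)

lemma CidLE.hasInjectiveDimensionLE (e : R ≃ₗ[R] C) (n : ℕ) (M : Type) [AddCommGroup M]
    [Module R M] (hM : CidLE R C n M inferInstance inferInstance) :
    HasInjectiveDimensionLE (ModuleCat.of R M) n := by
  have hI (I : Type) [AddCommGroup I] [Module R I] [Module.Injective R I] :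
      Injective (ModuleCat.of R (C →ₗ[R] I)) := by
    have := Module.injective_object_of_injective_module R I
    exact Injective.of_iso ((e.congrLeft I R).symm.trans
      (LinearMap.ringLmapEquivSelf R R I)).symm.toModuleIso this
  induction n generalizing M with
  | zero =>
    obtain ⟨I, _, _, _, ⟨e'⟩⟩ := hM
    exact injective_iff_hasInjectiveDimensionLT_one.1 (Injective.of_iso e'.symm.toModuleIso (hI I))
  | succ n ih =>
    obtain ⟨I, _, _, f, _, hf, hN⟩ := hM
    exact ((shortExact_mkQ_range hf).hasInjectiveDimensionLT_X₃_iff n (hI I)).1 (ih _ hN)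

lemma idLE_of_hasInjectiveDimensionLE (n : ℕ) (M : Type) [AddCommGroup M] [Module R M]
    (hM : HasInjectiveDimensionLE (ModuleCat.of R M) n) :
    idLE R n M inferInstance inferInstance := by
  induction n generalizing M with
  | zero =>
    have := injective_iff_hasInjectiveDimensionLT_one.2 hM
    exact Module.injective_module_of_injective_object R M
  | succ n ih =>
    obtain ⟨I, hI, f, hf⟩ := EnoughInjectives.presentation (ModuleCat.of R M)
    have hf' : Function.Injective f.hom := (ModuleCat.mono_iff_injective f).1 hf
    have : Injective (ModuleCat.of R I) := hI
    exact ⟨I, _, _, f.hom, Module.injective_module_of_injective_object R I, hf',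
      ih _ (((shortExact_mkQ_range hf').hasInjectiveDimensionLT_X₃_iff n hI).2 hM)⟩

end InjectiveDimension

/-- **Sather-Wagstaff–Yassemi.** Let `R` be a commutative noetherian local ring, `C` a
semidualizing `R`-module, and `M` a nonzero finitely generated module with `C-pd_R M = 0`
(i.e. `M ≅ C ⊗_R P` with `P` finitely generated projective) and finite `C`-injective
dimension.  Then `R` is Gorenstein. -/
theorem gorenstein_of_Cpd_zero (R : Type) [CommRing R] [IsNoetherianRing R] [IsLocalRing R]
    (C : Type) [AddCommGroup C] [Module R C] (hC : IsSemidualizing R C)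
    (M : Type) [AddCommGroup M] [Module R M] [Module.Finite R M] [Nontrivial M]
    (hM : ∃ (P : Type) (_ : AddCommGroup P) (_ : Module R P),
      Module.Projective R P ∧ Module.Finite R P ∧
        Nonempty ((TensorProduct R C P) ≃ₗ[R] M))
    (hCid : ∃ n : ℕ, CidLE R C n M inferInstance inferInstance) :
    IsGorensteinRing R := by
  obtain ⟨hfin, hbij, hext⟩ := hC
  obtain ⟨P, _, _, _, _, ⟨e⟩⟩ := hM
  obtain ⟨n, hn⟩ := hCid
  have hExt : ExtVanishing R C C := fun i => ext_subsingleton_of_extGroup i (hext _ i.succ_pos)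
  have : Nontrivial (C ⊗[R] P) := e.toEquiv.nontrivial
  have : Nontrivial C := by
    by_contra h
    rw [not_nontrivial_iff_subsingleton] at h
    exact not_subsingleton (C ⊗[R] P) inferInstance
  have : Nontrivial P := by
    by_contra h
    rw [not_nontrivial_iff_subsingleton] at h
    exact not_subsingleton (C ⊗[R] P) inferInstance
  have := Module.free_of_flat_of_isLocalRing (R := R) (P := P)
  let b := Module.Free.chooseBasis R P
  obtain ⟨j⟩ := b.index_nonempty
  let i : C →ₗ[R] M := e.toLinearMap ∘ₗ (TensorProduct.mk R C P).flip (b j)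
  let q : M →ₗ[R] C :=
    (TensorProduct.rid R C).toLinearMap ∘ₗ (b.coord j).lTensor C ∘ₗ e.symm.toLinearMap
  have hqi : q ∘ₗ i = LinearMap.id := by
    ext c
    simp [q, i]
  obtain ⟨hC', hu⟩ := hn.syzygyTensorInjective_and_unit_bijective hbij.2 hExt
  obtain ⟨u⟩ := nonempty_linearEquiv_of_unit_bijective hbij
    (unit_bijective_of_retract hu hqi)
  have := CidLE.hasInjectiveDimensionLE u n M hn
  let ret : Retract (ModuleCat.of R R) (ModuleCat.of R M) :=
    { i := ModuleCat.ofHom (i ∘ₗ u.toLinearMap)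
      r := ModuleCat.ofHom (u.symm.toLinearMap ∘ₗ q)
      retract := by
        ext
        have : q (i (u 1)) = u 1 := LinearMap.congr_fun hqi (u 1)
        simp [this] }
  exact ⟨n, idLE_of_hasInjectiveDimensionLE n R (ret.hasInjectiveDimensionLT (n + 1))⟩
end
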